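/- Let g : ℝ^n → ℝ be a polynomial that is (R,θ)-attenuated, where R ≥ √2 and 0 ≤ θ ≤ 1. Then for x ∼ N(0,1)^n the random variable g(x) is (1 + R²/2, √θ)-hyperconcentrated; i.e., writing μ = E_{x∼N(0,1)^n}[g(x)] and q = 1 + R²/2, we have (E[|g(x) − μ|^q])^{1/q} ≤ √θ·|μ|. -/

import Mathlib

open MeasureTheory ProbabilityTheory MvPolynomial

/-- The standard Gaussian measure `N(0,1)^n` on `ℝ^n`. -/
noncomputable def gaussianN (n : ℕ) : Measure (Fin n → ℝ) :=
  Measure.pi fun _ => gaussianReal 0 1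

/-- The normalized probabilists' Hermite polynomial `h_k = H_k / √(k!)`. -/
noncomputable def hermiteFn (k : ℕ) (t : ℝ) : ℝ :=
  ((Polynomial.hermite k).map (Int.castRingHom ℝ)).eval t / Real.sqrt (Nat.factorial k)

/-- The multivariate Hermite polynomial `h_α(x) = ∏ i, h_{α i}(x i)`. -/
noncomputable def hermiteMv {n : ℕ} (α : Fin n → ℕ) (x : Fin n → ℝ) : ℝ :=
  ∏ i, hermiteFn (α i) (x i)

/-- Hermite coefficient `f̂(α) = E_{x ∼ N(0,1)^n}[f(x)·h_α(x)]` of a function. -/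
noncomputable def hermiteCoeffF {n : ℕ} (f : (Fin n → ℝ) → ℝ) (α : Fin n → ℕ) : ℝ :=
  ∫ x, f x * hermiteMv α x ∂(gaussianN n)

/-- Hermite coefficient `ĝ(α)` of a polynomial. -/
noncomputable def hermiteCoeff {n : ℕ} (g : MvPolynomial (Fin n) ℝ) (α : Fin n → ℕ) : ℝ :=
  hermiteCoeffF (fun x => eval x g) α

/-- The squared Gaussian 2-norm `‖g‖₂² = E_{x ∼ N(0,1)^n}[g(x)²]`. -/
noncomputable def norm2sq {n : ℕ} (g : MvPolynomial (Fin n) ℝ) : ℝ :=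
  ∫ x, (eval x g) ^ 2 ∂(gaussianN n)

/-- The `λ`-zoom of `g` at `x`: `g_{λ|x}(y) = g(√(1-λ)·x + √λ·y)`, as a polynomial in `y`. -/
noncomputable def zoom {n : ℕ} (g : MvPolynomial (Fin n) ℝ) (lam : ℝ) (x : Fin n → ℝ) :
    MvPolynomial (Fin n) ℝ :=
  aeval (fun i => C (Real.sqrt (1 - lam) * x i) + C (Real.sqrt lam) * X i) g

/-- `HyperVar_R[g^{≥m}] = Σ_{|α| ≥ m} R^{2|α|}·ĝ(α)²`. -/
noncomputable def hyperVarGE {n : ℕ} (R : ℝ) (m : ℕ) (g : MvPolynomial (Fin n) ℝ) : ℝ :=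
  ∑' α : Fin n → ℕ, if m ≤ ∑ i, α i then R ^ (2 * ∑ i, α i) * hermiteCoeff g α ^ 2 else 0

/-- `HyperVar_R[g] = Σ_{α ≠ 0} R^{2|α|}·ĝ(α)²`. -/
noncomputable def hyperVar {n : ℕ} (R : ℝ) (g : MvPolynomial (Fin n) ℝ) : ℝ :=
  hyperVarGE R 1 g

/-- A nice distribution of polynomials of degree at most `d` on `ℝ^n`, indexed by
`υ ∈ ℝ^I`: each `g υ` has degree at most `d` and each coefficient of `g υ` is a
polynomial of degree at most `d` in `υ`. -/
def NiceFamily (n I d : ℕ) (g : (Fin I → ℝ) → MvPolynomial (Fin n) ℝ) : Prop :=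
  (∀ υ, (g υ).totalDegree ≤ d) ∧
  ∀ m : Fin n →₀ ℕ, ∃ P : MvPolynomial (Fin I) ℝ,
    P.totalDegree ≤ d ∧ ∀ υ, coeff m (g υ) = eval υ P

/-! ### The two-point inequality -/

lemma two_mul_mul_le_rpow_sub_rpow {s b : ℝ} (hs0 : 0 ≤ s) (hs1 : s ≤ 1) (hb0 : 0 ≤ b)
    (hb1 : b ≤ 1) : 2 * s * b ≤ (1 + b) ^ s - (1 - b) ^ s := by
  rcases hs0.eq_or_lt with rfl | hs
  · simp
  have hmono : MonotoneOn (fun b : ℝ => (1 + b) ^ s - (1 - b) ^ s - 2 * s * b)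
      (Set.Icc 0 1) := by
    have hd : ∀ x ∈ interior (Set.Icc (0 : ℝ) 1),
        HasDerivAt (fun b : ℝ => (1 + b) ^ s - (1 - b) ^ s - 2 * s * b)
          (1 * s * (1 + x) ^ (s - 1) - (-1) * s * (1 - x) ^ (s - 1) - 2 * s * 1) x := by
      intro x hx
      rw [interior_Icc] at hx
      refine (HasDerivAt.sub ?_ ?_).sub ((hasDerivAt_id x).const_mul _)
      · exact ((hasDerivAt_id x).const_add 1).rpow_const (Or.inl (by simp; linarith [hx.1]))
      · exact ((hasDerivAt_id x).const_sub 1).rpow_const (Or.inl (by simp; linarith [hx.2]))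
    refine monotoneOn_of_deriv_nonneg (convex_Icc 0 1) ?_
      (fun x hx => (hd x hx).differentiableAt.differentiableWithinAt) ?_
    · refine ContinuousOn.sub (ContinuousOn.sub ?_ ?_) (by fun_prop)
      · exact ContinuousOn.rpow_const (by fun_prop) (fun x _ => Or.inr hs0)
      · exact ContinuousOn.rpow_const (by fun_prop) (fun x _ => Or.inr hs0)
    · intro x hx
      rw [(hd x hx).deriv]
      rw [interior_Icc] at hx
      have h1 : 0 < 1 + x := by linarith [hx.1]
      have h2 : 0 < 1 - x := by linarith [hx.2]
      have hu := Real.rpow_pos_of_pos h1 (s - 1)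
      have hv := Real.rpow_pos_of_pos h2 (s - 1)
      have huv : 1 ≤ (1 + x) ^ (s - 1) * (1 - x) ^ (s - 1) := by
        rw [← Real.mul_rpow h1.le h2.le]
        exact Real.one_le_rpow_of_pos_of_le_one_of_nonpos (by positivity)
          (by nlinarith [sq_nonneg x]) (by linarith)
      have : 2 ≤ (1 + x) ^ (s - 1) + (1 - x) ^ (s - 1) := by
        nlinarith [sq_nonneg ((1 + x) ^ (s - 1) - (1 - x) ^ (s - 1))]
      nlinarith
  have := hmono (Set.left_mem_Icc.2 zero_le_one) ⟨hb0, hb1⟩ hb0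
  simp at this
  linarith

lemma one_add_mul_sq_le_rpow_add_rpow {p b : ℝ} (hp1 : 1 < p) (hp2 : p ≤ 2) (hb0 : 0 ≤ b)
    (hb1 : b ≤ 1) : 1 + p * (p - 1) / 2 * b ^ 2 ≤ ((1 + b) ^ p + (1 - b) ^ p) / 2 := by
  have hmono : MonotoneOn
      (fun b : ℝ => (1 + b) ^ p + (1 - b) ^ p - p * (p - 1) * b ^ 2) (Set.Icc 0 1) := by
    have hd : ∀ x : ℝ,
        HasDerivAt (fun b : ℝ => (1 + b) ^ p + (1 - b) ^ p - p * (p - 1) * b ^ 2)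
          (1 * p * (1 + x) ^ (p - 1) + (-1) * p * (1 - x) ^ (p - 1)
            - p * (p - 1) * (2 * x)) x := by
      intro x
      refine (HasDerivAt.add ?_ ?_).sub ?_
      · exact ((hasDerivAt_id x).const_add 1).rpow_const (Or.inr hp1.le)
      · exact ((hasDerivAt_id x).const_sub 1).rpow_const (Or.inr hp1.le)
      · simpa using (hasDerivAt_pow 2 x).const_mul (p * (p - 1))
    refine monotoneOn_of_deriv_nonneg (convex_Icc 0 1)
      (fun x _ => (hd x).continuousAt.continuousWithinAt)
      (fun x _ => (hd x).differentiableAt.differentiableWithinAt) ?_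
    intro x hx
    rw [(hd x).deriv]
    rw [interior_Icc] at hx
    have := two_mul_mul_le_rpow_sub_rpow (s := p - 1) (by linarith) (by linarith) hx.1.le hx.2.le
    nlinarith
  have := hmono (Set.left_mem_Icc.2 zero_le_one) ⟨hb0, hb1⟩ hb0
  simp at this
  linarith

/-- The two-point hypercontractive inequality from `L^p` to `L²`. -/
lemma rpow_sq_add_le_rpow_abs_add_rpow_abs {p : ℝ} (hp1 : 1 < p) (hp2 : p ≤ 2) (a b : ℝ) :
    (a ^ 2 + (p - 1) * b ^ 2) ^ (p / 2) ≤ (|a + b| ^ p + |a - b| ^ p) / 2 := by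
  have key : ∀ a b : ℝ, 0 ≤ b → b ≤ a →
      (a ^ 2 + (p - 1) * b ^ 2) ^ (p / 2) ≤ (|a + b| ^ p + |a - b| ^ p) / 2 := by
    intro a b hb hba
    rcases (hb.trans hba).eq_or_lt with rfl | ha
    · obtain rfl : b = 0 := le_antisymm hba hb
      simp [Real.zero_rpow (by linarith : p ≠ 0), Real.zero_rpow (by linarith : p / 2 ≠ 0)]
    set t := b / a with ht
    have hbt : b = a * t := by rw [ht]; field_simp
    have ht0 : 0 ≤ t := by positivity
    have ht1 : t ≤ 1 := (div_le_one ha).2 hba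
    have e1 : a ^ 2 + (p - 1) * b ^ 2 = a ^ 2 * (1 + (p - 1) * t ^ 2) := by rw [hbt]; ring
    have e2 : |a + b| = a * (1 + t) := by rw [abs_of_nonneg (by linarith), hbt]; ring
    have e3 : |a - b| = a * (1 - t) := by rw [abs_of_nonneg (by linarith), hbt]; ring
    have hnn : 0 ≤ (p - 1) * t ^ 2 := mul_nonneg (by linarith) (sq_nonneg t)
    have e4 : (a ^ 2) ^ (p / 2) = a ^ p := by
      rw [← Real.rpow_natCast, ← Real.rpow_mul ha.le]; congr 1; push_cast; ring
    rw [e1, e2, e3, Real.mul_rpow (by positivity) (by linarith), e4,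
      Real.mul_rpow ha.le (by linarith), Real.mul_rpow ha.le (by linarith), ← mul_add,
      mul_div_assoc]
    refine mul_le_mul_of_nonneg_left ?_ (by positivity)
    refine le_trans ?_ (one_add_mul_sq_le_rpow_add_rpow hp1 hp2 ht0 ht1)
    have := rpow_one_add_le_one_add_mul_self (s := (p - 1) * t ^ 2) (by linarith)
      (p := p / 2) (by linarith) (by linarith)
    linarith
  have hsum : |a + b| ^ p + |a - b| ^ p = |(|a| + |b|)| ^ p + |(|a| - |b|)| ^ p := by
    rcases le_total 0 a with ha | ha <;> rcases le_total 0 b with hb | hb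
    · rw [abs_of_nonneg ha, abs_of_nonneg hb]
    · rw [abs_of_nonneg ha, abs_of_nonpos hb, add_comm, sub_eq_add_neg, sub_neg_eq_add]
    · rw [abs_of_nonpos ha, abs_of_nonneg hb, add_comm, ← abs_neg (a - b), ← abs_neg (a + b)]
      ring_nf
    · rw [abs_of_nonpos ha, abs_of_nonpos hb, ← abs_neg (a - b), ← abs_neg (a + b)]
      ring_nf
  rw [hsum, ← sq_abs a, ← sq_abs b]
  rcases le_total |b| |a| with h | h
  · exact key _ _ (abs_nonneg b) h
  · have := key _ _ (abs_nonneg a) h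
    rw [abs_sub_comm, add_comm |b| |a|] at this
    refine le_trans (Real.rpow_le_rpow ?_ ?_ (by linarith)) this
    · have := sq_nonneg |b|
      nlinarith [sq_nonneg |a|]
    · have : |a| ^ 2 ≤ |b| ^ 2 := pow_le_pow_left₀ (abs_nonneg a) h 2
      nlinarith

lemma abs_sign_mul_rpow {q : ℝ} (hq : 2 ≤ q) (u : ℝ) :
    |SignType.sign u * |u| ^ (q - 1)| ^ (q / (q - 1)) = |u| ^ q := by
  rcases eq_or_ne u 0 with rfl | hu
  · simp [Real.zero_rpow (by linarith : q ≠ 0), Real.zero_rpow (by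
      have : 0 < q - 1 := by linarith
      positivity : q / (q - 1) ≠ 0)]
  · have h1 : |((SignType.sign u : SignType) : ℝ)| = 1 := by
      rcases lt_or_gt_of_ne hu with h | h <;> simp [h]
    rw [abs_mul, h1, one_mul, abs_of_nonneg (by positivity), ← Real.rpow_mul (abs_nonneg u)]
    congr 1
    have : q - 1 ≠ 0 := by linarith
    field_simp

lemma mul_sign_mul_rpow {q : ℝ} (hq : 2 ≤ q) (u : ℝ) :
    u * (SignType.sign u * |u| ^ (q - 1)) = |u| ^ q := by
  rw [← mul_assoc, mul_comm u, sign_mul_self, mul_comm]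
  rcases eq_or_ne u 0 with rfl | hu
  · simp [Real.zero_rpow (by linarith : q ≠ 0)]
  · rw [← Real.rpow_add_one (by simpa using hu)]
    ring_nf

/-- The two-point hypercontractive inequality from `L²` to `L^q`. -/
lemma rpow_abs_add_rpow_abs_le_rpow_sq_add {q ρ : ℝ} (hq : 2 ≤ q) (hρ : ρ ^ 2 * (q - 1) = 1)
    (a b : ℝ) :
    (|a + ρ * b| ^ q + |a - ρ * b| ^ q) / 2 ≤ (a ^ 2 + b ^ 2) ^ (q / 2) := by
  set u := a + ρ * b with hu
  set v := a - ρ * b with hv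
  set U : ℝ := SignType.sign u * |u| ^ (q - 1) with hU
  set V : ℝ := SignType.sign v * |v| ^ (q - 1) with hV
  set M : ℝ := (|u| ^ q + |v| ^ q) / 2 with hM
  have hM0 : 0 ≤ M := by positivity
  rcases hM0.eq_or_lt with hM0 | hM0
  · rw [← hM0]; positivity
  set α := (U + V) / 2 with hα
  set β := (U - V) / 2 with hβ
  have hq1 : 0 < q - 1 := by linarith
  have hρ2 : ρ ^ 2 = q / (q - 1) - 1 := by field_simp; linarith
  have hp := rpow_sq_add_le_rpow_abs_add_rpow_abs (p := q / (q - 1))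
    (by rw [lt_div_iff₀ hq1]; linarith) (by rw [div_le_iff₀ hq1]; linarith) α β
  rw [show α + β = U by ring, show α - β = V by ring, abs_sign_mul_rpow hq,
    abs_sign_mul_rpow hq, ← hM, ← hρ2] at hp
  have hMeq : M = a * α + b * (ρ * β) := by
    rw [hM, ← mul_sign_mul_rpow hq u, ← mul_sign_mul_rpow hq v, ← hU, ← hV, hα, hβ, hu, hv]
    ring
  set S := α ^ 2 + ρ ^ 2 * β ^ 2 with hS
  have hS0 : 0 ≤ S := by positivity
  have hCS : M ^ 2 ≤ (a ^ 2 + b ^ 2) * S := by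
    rw [hMeq, hS]
    nlinarith [sq_nonneg (a * (ρ * β) - b * α)]
  have hST : S ≤ M ^ (2 * (q - 1) / q) := by
    have := Real.rpow_le_rpow (by positivity) hp (z := 2 * (q - 1) / q) (by positivity)
    rwa [← Real.rpow_mul hS0, show q / (q - 1) / 2 * (2 * (q - 1) / q) = 1 by field_simp,
      Real.rpow_one] at this
  have hle : M ^ (2 / q) ≤ a ^ 2 + b ^ 2 := by
    have h1 : M ^ (2 / q) * M ^ (2 * (q - 1) / q) = M ^ 2 := by
      rw [← Real.rpow_add hM0, ← Real.rpow_natCast]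
      congr 1
      push_cast
      field_simp
      ring
    have h2 : M ^ (2 / q) * M ^ (2 * (q - 1) / q) ≤ (a ^ 2 + b ^ 2) * M ^ (2 * (q - 1) / q) := by
      rw [h1]
      exact hCS.trans (mul_le_mul_of_nonneg_left hST (by positivity))
    exact le_of_mul_le_mul_right h2 (Real.rpow_pos_of_pos hM0 _)
  have := Real.rpow_le_rpow (by positivity) hle (z := q / 2) (by positivity)
  rwa [← Real.rpow_mul hM0.le, show 2 / q * (q / 2) = 1 by field_simp, Real.rpow_one] at this

/-! ### Hypercontractive systems and their tensor products -/

lemma lintegral_sum_sq_rpow_le {Ω ι : Type*} [MeasurableSpace Ω] [Fintype ι] {ν : Measure Ω}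
    {q : ℝ} (hq : 2 ≤ q) {F : ι → Ω → ℝ} (hF : ∀ i, Measurable (F i)) {a : ι → ℝ}
    (ha : ∀ i, 0 ≤ a i)
    (h : ∀ i, ∫⁻ x, ‖F i x‖ₑ ^ q ∂ν ≤ ENNReal.ofReal (a i) ^ (q / 2)) :
    ∫⁻ x, ENNReal.ofReal (∑ i, F i x ^ 2) ^ (q / 2) ∂ν ≤ ENNReal.ofReal (∑ i, a i) ^ (q / 2) := by
  have hr : 0 < q / 2 := by linarith
  have hp0 : ENNReal.ofReal (q / 2) ≠ 0 := by simpa using hr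
  have hn : ∀ f : Ω → ℝ, eLpNorm f (ENNReal.ofReal (q / 2)) ν
      = (∫⁻ x, ‖f x‖ₑ ^ (q / 2) ∂ν) ^ (1 / (q / 2)) := by
    intro f
    rw [eLpNorm_eq_lintegral_rpow_enorm_toReal hp0 ENNReal.ofReal_ne_top,
      ENNReal.toReal_ofReal hr.le]
  have hle : eLpNorm (∑ i, fun x => F i x ^ 2) (ENNReal.ofReal (q / 2)) ν
      ≤ ENNReal.ofReal (∑ i, a i) := by
    refine (eLpNorm_sum_le (fun i _ => ((hF i).pow_const 2).aestronglyMeasurable) ?_).trans ?_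
    · rw [ENNReal.one_le_ofReal]; linarith
    · rw [ENNReal.ofReal_sum_of_nonneg (fun i _ => ha i)]
      refine Finset.sum_le_sum fun i _ => ?_
      rw [hn, one_div, ENNReal.rpow_inv_le_iff hr]
      refine le_trans (le_of_eq (lintegral_congr fun x => ?_)) (h i)
      rw [enorm_pow, ← ENNReal.rpow_natCast, ← ENNReal.rpow_mul]
      congr 1
      push_cast
      ring
  rw [hn, one_div, ENNReal.rpow_inv_le_iff hr] at hle
  refine le_trans (le_of_eq (lintegral_congr fun x => ?_)) hle
  rw [Finset.sum_apply, Real.enorm_of_nonneg (Finset.sum_nonneg fun i _ => sq_nonneg _)]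

/-- A finite system `e` of functions such that `‖∑ i, c i * e i‖_q ≤ (∑ i, c i ^ 2) ^ (1 / 2)`
for all coefficients `c`. -/
def IsHypercontractiveSystem {Ω ι : Type*} [MeasurableSpace Ω] [Fintype ι] (ν : Measure Ω)
    (q : ℝ) (e : ι → Ω → ℝ) : Prop :=
  ∀ c : ι → ℝ, ∫⁻ x, ‖∑ i, c i * e i x‖ₑ ^ q ∂ν ≤ ENNReal.ofReal (∑ i, c i ^ 2) ^ (q / 2)

lemma IsHypercontractiveSystem.prod {Ω Ω' ι κ : Type*} [MeasurableSpace Ω] [MeasurableSpace Ω']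
    [Fintype ι] [Fintype κ] {ν : Measure Ω} {ν' : Measure Ω'} [SFinite ν] [SFinite ν'] {q : ℝ}
    (hq : 2 ≤ q) {e : ι → Ω → ℝ} {e' : κ → Ω' → ℝ} (he : ∀ i, Measurable (e i))
    (he' : ∀ k, Measurable (e' k)) (h : IsHypercontractiveSystem ν q e)
    (h' : IsHypercontractiveSystem ν' q e') :
    IsHypercontractiveSystem (ν.prod ν') q (fun (j : ι × κ) z => e j.1 z.1 * e' j.2 z.2) := by
  intro c
  rw [lintegral_prod _ (by fun_prop)]
  have h1 : ∀ x, ∫⁻ y, ‖∑ j : ι × κ, c j * (e j.1 x * e' j.2 y)‖ₑ ^ q ∂ν'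
      ≤ ENNReal.ofReal (∑ k, (∑ i, c (i, k) * e i x) ^ 2) ^ (q / 2) := by
    intro x
    refine le_trans (le_of_eq (lintegral_congr fun y => ?_)) (h' fun k => ∑ i, c (i, k) * e i x)
    congr 2
    rw [Fintype.sum_prod_type_right]
    refine Finset.sum_congr rfl fun k _ => ?_
    rw [Finset.sum_mul]
    exact Finset.sum_congr rfl fun i _ => by ring
  refine (lintegral_mono h1).trans ?_
  rw [Fintype.sum_prod_type_right]
  exact lintegral_sum_sq_rpow_le hq (F := fun k x => ∑ i, c (i, k) * e i x)
    (a := fun k => ∑ i, c (i, k) ^ 2) (fun k => by fun_prop)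
    (fun k => Finset.sum_nonneg fun i _ => sq_nonneg _) (fun k => h fun i => c (i, k))

lemma IsHypercontractiveSystem.pi {Ω ι : Type*} [MeasurableSpace Ω] [Fintype ι] {ν : Measure Ω}
    [IsProbabilityMeasure ν] {q : ℝ} (hq : 2 ≤ q) {e : ι → Ω → ℝ} (he : ∀ i, Measurable (e i))
    (h : IsHypercontractiveSystem ν q e) (n : ℕ) :
    IsHypercontractiveSystem (Measure.pi fun _ : Fin n => ν) q
      (fun (α : Fin n → ι) x => ∏ i, e (α i) (x i)) := by
  induction n with
  | zero =>
    intro c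
    have : ∀ r : ℝ, ‖r‖ₑ ^ q = ENNReal.ofReal (r ^ 2) ^ (q / 2) := by
      intro r
      rw [← Real.enorm_of_nonneg (sq_nonneg r), enorm_pow, ← ENNReal.rpow_natCast,
        ← ENNReal.rpow_mul]
      congr 1
      push_cast
      ring
    simp [this]
  | succ n ih =>
    intro c
    have key := h.prod hq he (fun α => by fun_prop) ih
      (fun j => c (Fin.cons j.1 j.2))
    have hmp := measurePreserving_piFinSuccAbove (fun _ : Fin (n + 1) => ν) 0
    rw [← hmp.lintegral_comp (by fun_prop)] at key
    have hs : ∀ f : (Fin (n + 1) → ι) → ℝ,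
        ∑ α, f α = ∑ j : ι × (Fin n → ι), f (Fin.cons j.1 j.2) := fun f =>
      ((Fin.consEquiv fun _ : Fin (n + 1) => ι).sum_comp f).symm
    rw [hs]
    refine le_trans (le_of_eq (lintegral_congr fun x => ?_)) key
    rw [hs]
    congr 2
    refine Finset.sum_congr rfl fun j _ => ?_
    simp [Fin.prod_univ_succ, MeasurableEquiv.piFinSuccAbove, Fin.tail]

/-! ### Elementary symmetric functions of random signs -/

/-- The `k`-th elementary symmetric function of `x 0, …, x (m - 1)`. -/
def elemSymm (x : ℕ → ℝ) : ℕ → ℕ → ℝ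
  | _, 0 => 1
  | 0, _ + 1 => 0
  | m + 1, k + 1 => elemSymm x m (k + 1) + x m * elemSymm x m k

lemma elemSymm_zero_right (x : ℕ → ℝ) (m : ℕ) : elemSymm x m 0 = 1 := by
  cases m <;> rfl

lemma elemSymm_zero_succ (x : ℕ → ℝ) (k : ℕ) : elemSymm x 0 (k + 1) = 0 := rfl

lemma elemSymm_succ_succ (x : ℕ → ℝ) (m k : ℕ) :
    elemSymm x (m + 1) (k + 1) = elemSymm x m (k + 1) + x m * elemSymm x m k := rfl

lemma elemSymm_congr {x y : ℕ → ℝ} {m : ℕ} (h : ∀ i < m, x i = y i) (k : ℕ) :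
    elemSymm x m k = elemSymm y m k := by
  induction m generalizing k with
  | zero => cases k <;> rfl
  | succ m ih =>
    cases k with
    | zero => rfl
    | succ k =>
      have ih := ih fun i hi => h i (hi.trans m.lt_succ_self)
      rw [elemSymm_succ_succ, elemSymm_succ_succ, ih, ih, h m m.lt_succ_self]

lemma elemSymm_one (x : ℕ → ℝ) (m : ℕ) : elemSymm x m 1 = ∑ i ∈ Finset.range m, x i := by
  induction m with
  | zero => rfl
  | succ m ih => rw [elemSymm_succ_succ, ih, elemSymm_zero_right, Finset.sum_range_succ, mul_one]

@[fun_prop]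
lemma measurable_elemSymm (m k : ℕ) : Measurable fun x => elemSymm x m k := by
  induction m generalizing k with
  | zero => cases k <;> exact measurable_const
  | succ m ih =>
    cases k with
    | zero => exact measurable_const
    | succ k => exact (ih _).add ((measurable_pi_apply m).mul (ih _))

lemma sum_mul_elemSymm {x : ℕ → ℝ} (hx : ∀ i, x i ^ 2 = 1) (m k : ℕ) :
    (∑ i ∈ Finset.range m, x i) * elemSymm x m (k + 1)
      = (k + 2) * elemSymm x m (k + 2) + (m - k) * elemSymm x m k := by
  induction m generalizing k with
  | zero => cases k <;> simp [elemSymm_zero_succ]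
  | succ m ih =>
    have h1 := ih k
    have hm := hx m
    cases k with
    | zero =>
      have hS := elemSymm_one x m
      simp only [Finset.sum_range_succ, elemSymm_succ_succ, elemSymm_zero_right, ← hS] at h1 ⊢
      push_cast at h1 ⊢
      linear_combination h1 + hm
    | succ k =>
      have h2 := ih k
      simp only [Finset.sum_range_succ, elemSymm_succ_succ] at h1 h2 ⊢
      push_cast at h1 h2 ⊢
      linear_combination h1 + x m * h2 + elemSymm x m (k + 1) * hm

/-- The Rademacher distribution, uniform on `{1, -1}`. -/
noncomputable def rademacher : Measure ℝ :=
  (2 : ENNReal)⁻¹ • Measure.dirac 1 + (2 : ENNReal)⁻¹ • Measure.dirac (-1)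

instance : IsProbabilityMeasure rademacher :=
  ⟨by simp [rademacher, ENNReal.inv_two_add_inv_two]⟩

lemma lintegral_rademacher (f : ℝ → ENNReal) :
    ∫⁻ x, f x ∂rademacher = 2⁻¹ * f 1 + 2⁻¹ * f (-1) := by
  simp [rademacher]

lemma integral_rademacher (f : ℝ → ℝ) : ∫ x, f x ∂rademacher = (f 1 + f (-1)) / 2 := by
  rw [rademacher, integral_add_measure, integral_smul_measure, integral_smul_measure]
  · simp
    ring
  · exact (integrable_dirac (by simp)).smul_measure (by simp)
  · exact (integrable_dirac (by simp)).smul_measure (by simp)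

lemma ae_rademacher_sq : ∀ᵐ x ∂rademacher, x ^ 2 = 1 := by
  rw [rademacher, ae_add_measure_iff]
  constructor <;> refine Measure.ae_smul_measure ?_ _ <;> simp [ae_dirac_eq]

lemma lintegral_rademacher_le {q ρ : ℝ} (hq : 2 ≤ q) (hρ : ρ ^ 2 * (q - 1) = 1) (a b : ℝ) :
    ∫⁻ y, ‖a + y * (ρ * b)‖ₑ ^ q ∂rademacher ≤ ENNReal.ofReal (a ^ 2 + b ^ 2) ^ (q / 2) := by
  have hq0 : 0 ≤ q := by linarith
  rw [lintegral_rademacher, ENNReal.ofReal_rpow_of_nonneg (by positivity) (by positivity)]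
  refine le_trans (le_of_eq ?_)
    (ENNReal.ofReal_le_ofReal (rpow_abs_add_rpow_abs_le_rpow_sq_add hq hρ a b))
  have h2 : (2 : ENNReal)⁻¹ = ENNReal.ofReal 2⁻¹ := by
    rw [ENNReal.ofReal_inv_of_pos two_pos]; simp
  rw [Real.enorm_eq_ofReal_abs, Real.enorm_eq_ofReal_abs,
    ENNReal.ofReal_rpow_of_nonneg (abs_nonneg _) hq0,
    ENNReal.ofReal_rpow_of_nonneg (abs_nonneg _) hq0, h2,
    ← ENNReal.ofReal_mul (by positivity), ← ENNReal.ofReal_mul (by positivity),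
    ← ENNReal.ofReal_add (by positivity) (by positivity)]
  congr 1
  rw [show a + -1 * (ρ * b) = a - ρ * b by ring, one_mul]
  ring

section RandomSigns

variable {Ω : Type*} [MeasurableSpace Ω] {P : Measure Ω} [IsProbabilityMeasure P]
  {X : ℕ → Ω → ℝ}

lemma lintegral_add_sign_mul_le {q ρ : ℝ} (hq : 2 ≤ q) (hρ : ρ ^ 2 * (q - 1) = 1)
    {Y : Ω → ℝ × ℝ} {ε : Ω → ℝ} (hY : Measurable Y) (hε : Measurable ε)
    (hlaw : P.map ε = rademacher) (hind : IndepFun Y ε P) :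
    ∫⁻ ω, ‖(Y ω).1 + ε ω * (ρ * (Y ω).2)‖ₑ ^ q ∂P
      ≤ ∫⁻ ω, ENNReal.ofReal ((Y ω).1 ^ 2 + (Y ω).2 ^ 2) ^ (q / 2) ∂P := by
  have hmap := (indepFun_iff_map_prod_eq_prod_map_map hY.aemeasurable hε.aemeasurable).1 hind
  have e1 : ∫⁻ ω, ‖(Y ω).1 + ε ω * (ρ * (Y ω).2)‖ₑ ^ q ∂P
      = ∫⁻ z : (ℝ × ℝ) × ℝ, ‖z.1.1 + z.2 * (ρ * z.1.2)‖ₑ ^ q ∂(P.map fun ω => (Y ω, ε ω)) := by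
    rw [lintegral_map (by fun_prop) (by fun_prop)]
  rw [e1, hmap, hlaw, lintegral_prod _ (by fun_prop), lintegral_map (by fun_prop) hY]
  exact lintegral_mono fun ω => lintegral_rademacher_le hq hρ _ _

lemma lintegral_sum_elemSymm_le {q ρ : ℝ} (hq : 2 ≤ q) (hρ : ρ ^ 2 * (q - 1) = 1)
    (hX : ∀ i, Measurable (X i)) (hlaw : ∀ i, P.map (X i) = rademacher) (hind : iIndepFun X P)
    (m K : ℕ) (c : ℕ → ℝ) :
    ∫⁻ ω, ‖∑ k ∈ Finset.range K, c k * (ρ ^ k * elemSymm (fun i => X i ω) m k)‖ₑ ^ q ∂P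
      ≤ ENNReal.ofReal (∑ k ∈ Finset.range K, c k ^ 2 * m.choose k) ^ (q / 2) := by
  have hq0 : 0 < q := by linarith
  induction m generalizing K c with
  | zero =>
    rcases K with _ | K
    · simp [hq0]
    · simp only [Finset.sum_range_succ', elemSymm_zero_succ, elemSymm_zero_right]
      simp only [mul_zero, Finset.sum_const_zero, zero_add, Nat.choose_zero_succ, Nat.cast_zero,
        Nat.choose_self, Nat.cast_one, mul_one, pow_zero, lintegral_const, measure_univ]
      rw [← Real.enorm_of_nonneg (sq_nonneg (c 0)), enorm_pow, ← ENNReal.rpow_natCast,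
        ← ENNReal.rpow_mul]
      refine le_of_eq (congrArg _ ?_)
      push_cast
      ring
  | succ m ih =>
    rcases K with _ | K
    · simp [hq0]
    set A : (ℕ → ℝ) → ℝ := fun x =>
      ∑ k ∈ Finset.range (K + 1), c k * (ρ ^ k * elemSymm x m k) with hA
    set B : (ℕ → ℝ) → ℝ := fun x =>
      ∑ k ∈ Finset.range K, c (k + 1) * (ρ ^ k * elemSymm x m k) with hB
    have hAm : Measurable A := by fun_prop
    have hBm : Measurable B := by fun_prop
    have hXm : Measurable fun ω i => X i ω := by fun_prop
    have hdecomp : ∀ x : ℕ → ℝ,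
        ∑ k ∈ Finset.range (K + 1), c k * (ρ ^ k * elemSymm x (m + 1) k)
          = A x + x m * (ρ * B x) := by
      intro x
      rw [hA, hB]
      simp only [Finset.sum_range_succ' _ K, elemSymm_succ_succ, elemSymm_zero_right,
        Finset.mul_sum]
      rw [add_right_comm, ← Finset.sum_add_distrib]
      congr 1
      exact Finset.sum_congr rfl fun k _ => by ring
    have hI : IndepFun (fun ω => (A fun i => X i ω, B fun i => X i ω)) (X m) P := by
      have h0 := hind.indepFun_finset (Finset.range m) {m} (by simp) hX
      let ext : (Finset.range m → ℝ) → ℕ → ℝ := fun x i =>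
        if h : i ∈ Finset.range m then x ⟨i, h⟩ else 0
      have hext : Measurable ext := by
        refine measurable_pi_lambda _ fun i => ?_
        by_cases h : i ∈ Finset.range m
        · simpa only [ext, h, dif_pos] using measurable_pi_apply _
        · simpa only [ext, h, dif_neg, not_false_eq_true] using measurable_const
      have hψ : Measurable fun x : (({m} : Finset ℕ) → ℝ) => x ⟨m, by simp⟩ :=
        measurable_pi_apply _
      have h1 := h0.comp (φ := fun x => (A (ext x), B (ext x)))
        (ψ := fun x : (({m} : Finset ℕ) → ℝ) => x ⟨m, by simp⟩) (by fun_prop)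
        hψ
      have hcongr : ∀ ω k, elemSymm (fun i => X i ω) m k
          = elemSymm (ext fun i : Finset.range m => X i ω) m k := fun ω k =>
        elemSymm_congr (fun i hi => by simp [ext, hi]) k
      convert h1 using 1
      · funext ω
        simp [A, B, hcongr]
      · rfl
    simp only [hdecomp]
    refine (lintegral_add_sign_mul_le hq hρ
      (Y := fun ω => (A fun i => X i ω, B fun i => X i ω)) (by fun_prop) (hX m) (hlaw m)
      hI).trans ?_
    have hnn : ∀ (L : ℕ) (d : ℕ → ℝ), 0 ≤ ∑ k ∈ Finset.range L, d k ^ 2 * (m.choose k : ℝ) :=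
      fun L d => Finset.sum_nonneg fun k _ => by positivity
    have hab := lintegral_sum_sq_rpow_le (ν := P) hq
      (F := fun (j : Fin 2) ω => ![A fun i => X i ω, B fun i => X i ω] j)
      (a := ![∑ k ∈ Finset.range (K + 1), c k ^ 2 * m.choose k,
        ∑ k ∈ Finset.range K, c (k + 1) ^ 2 * m.choose k])
      (by intro j; fin_cases j <;> simp <;> fun_prop)
      (Fin.forall_fin_two.2 ⟨hnn (K + 1) c, hnn K fun k => c (k + 1)⟩)
      (by
        intro j
        fin_cases j
        · exact ih (K + 1) c
        · exact ih K fun k => c (k + 1))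
    simp only [Fin.sum_univ_two, Matrix.cons_val_zero, Matrix.cons_val_one] at hab
    refine hab.trans (le_of_eq ?_)
    congr 2
    simp only [Finset.sum_range_succ' _ K, Nat.choose_succ_succ, Nat.choose_zero_right]
    rw [add_right_comm, ← Finset.sum_add_distrib]
    congr 1
    exact Finset.sum_congr rfl fun k _ => by push_cast; ring

end RandomSigns

/-! ### Hypercontractivity of the Hermite functions -/

open Filter Topology

/-- A deformation of the Hermite polynomials: at `s = 0` it is the Hermite polynomial, and at
`s = 1 / m` it expresses elementary symmetric functions of `m` signs in terms of their sum. -/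
def deformedHermite : ℕ → ℝ → ℝ → ℝ
  | 0, _, _ => 1
  | 1, _, x => x
  | k + 2, s, x => x * deformedHermite (k + 1) s x
      - (k + 1) * (1 - k * s) * deformedHermite k s x

@[fun_prop]
lemma continuous_deformedHermite (k : ℕ) :
    Continuous fun z : ℝ × ℝ => deformedHermite k z.2 z.1 := by
  induction k using Nat.twoStepInduction with
  | zero => exact continuous_const
  | one => exact continuous_fst
  | more k h0 h1 => simp only [deformedHermite]; fun_prop

lemma derivative_hermite_succ (k : ℕ) :
    Polynomial.derivative (Polynomial.hermite (k + 1))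
      = (k + 1 : Polynomial ℤ) * Polynomial.hermite k := by
  induction k with
  | zero => simp [Polynomial.hermite_succ]
  | succ k ih =>
    rw [Polynomial.hermite_succ (k + 1), Polynomial.derivative_sub, Polynomial.derivative_mul, ih,
      Polynomial.derivative_mul, Polynomial.hermite_succ k]
    simp
    ring

lemma hermite_succ_succ (k : ℕ) : Polynomial.hermite (k + 2)
    = Polynomial.X * Polynomial.hermite (k + 1)
      - (k + 1 : Polynomial ℤ) * Polynomial.hermite k := by
  rw [Polynomial.hermite_succ (k + 1), derivative_hermite_succ]

/-- The real Hermite polynomial `H_k`. -/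
noncomputable def hermiteR (k : ℕ) : Polynomial ℝ :=
  (Polynomial.hermite k).map (Int.castRingHom ℝ)

lemma hermiteR_zero : hermiteR 0 = 1 := by simp [hermiteR]

lemma hermiteR_one : hermiteR 1 = Polynomial.X := by simp [hermiteR]

lemma hermiteR_succ_succ (k : ℕ) :
    hermiteR (k + 2) = Polynomial.X * hermiteR (k + 1) - (k + 1 : Polynomial ℝ) * hermiteR k := by
  rw [hermiteR, hermite_succ_succ]
  simp [hermiteR, -Polynomial.hermite_succ]

lemma hermiteR_succ (k : ℕ) :
    hermiteR (k + 1) = Polynomial.X * hermiteR k - Polynomial.derivative (hermiteR k) := by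
  simp [hermiteR, Polynomial.hermite_succ, Polynomial.derivative_map]

lemma derivative_hermiteR_succ (k : ℕ) :
    Polynomial.derivative (hermiteR (k + 1)) = (k + 1 : Polynomial ℝ) * hermiteR k := by
  rw [hermiteR, Polynomial.derivative_map, derivative_hermite_succ]
  simp [hermiteR]

lemma hermiteFn_eq (k : ℕ) (t : ℝ) : hermiteFn k t = (hermiteR k).eval t / √(k.factorial) := rfl

lemma deformedHermite_zero (k : ℕ) (x : ℝ) : deformedHermite k 0 x = (hermiteR k).eval x := by
  induction k using Nat.twoStepInduction with
  | zero => simp [deformedHermite, hermiteR_zero]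
  | one => simp [deformedHermite, hermiteR_one]
  | more k h0 h1 => simp [deformedHermite, h0, h1, hermiteR_succ_succ]

lemma deformedHermite_inv {x : ℕ → ℝ} (hx : ∀ i, x i ^ 2 = 1) {m : ℕ} (hm : m ≠ 0) (k : ℕ) :
    deformedHermite k (m : ℝ)⁻¹ ((√m)⁻¹ * ∑ i ∈ Finset.range m, x i)
      = k.factorial / √m ^ k * elemSymm x m k := by
  have hm0 : (0 : ℝ) < m := by positivity
  have hs : √(m : ℝ) ≠ 0 := by positivity
  have hs2 : (m : ℝ) = √m ^ 2 := (Real.sq_sqrt hm0.le).symm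
  induction k using Nat.twoStepInduction with
  | zero => simp [deformedHermite, elemSymm_zero_right]
  | one => simp [deformedHermite, elemSymm_one]
  | more k h0 h1 =>
    have h := sum_mul_elemSymm hx m k
    rw [deformedHermite, h0, h1, Nat.factorial_succ (k + 1), Nat.factorial_succ k]
    push_cast
    have e : (√(m : ℝ))⁻¹ * (∑ i ∈ Finset.range m, x i)
          * ((k + 1) * k.factorial / √m ^ (k + 1) * elemSymm x m (k + 1))
        = (k + 1) * k.factorial / √m ^ (k + 2)
          * ((∑ i ∈ Finset.range m, x i) * elemSymm x m (k + 1)) := by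
      field_simp
      ring
    have e' : (1 - k * (m : ℝ)⁻¹) = (m - k) / √m ^ 2 := by
      rw [← hs2]; field_simp
    rw [e, h, e']
    field_simp
    ring

lemma measurable_hermiteFn (k : ℕ) : Measurable (hermiteFn k) := by
  unfold hermiteFn
  exact ((Polynomial.continuous _).measurable).div_const _

/-- Gaussian hypercontractivity in one dimension. -/
lemma isHypercontractiveSystem_hermiteFn {q ρ : ℝ} (hq : 2 ≤ q) (hρ : ρ ^ 2 * (q - 1) = 1)
    (K : ℕ) : IsHypercontractiveSystem (gaussianReal 0 1) q
      (fun (k : Fin K) x => ρ ^ (k : ℕ) * hermiteFn k x) := by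
  intro c
  have hq0 : 0 < q := by linarith
  obtain ⟨Ω, _, P, X, hX, hlaw, hind, _⟩ := exists_iid ℕ rademacher
  have hid : ∀ i, IdentDistrib (X i) (X 0) P P := fun i => (hlaw i).identDistrib (hlaw 0)
  have hcomp : ∀ f : ℝ → ℝ, Measurable f → ∫ ω, f (X 0 ω) ∂P = (f 1 + f (-1)) / 2 := by
    intro f hf
    rw [← integral_rademacher, ← (hlaw 0).map_eq,
      integral_map (hX 0).aemeasurable hf.aestronglyMeasurable]
  have hsq : ∀ᵐ ω ∂P, ∀ i, X i ω ^ 2 = 1 := by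
    refine ae_all_iff.2 fun i => ?_
    have := ae_rademacher_sq
    rw [← (hlaw i).map_eq] at this
    exact ae_of_ae_map (hX i).aemeasurable this
  have hclt := tendstoInDistribution_inv_sqrt_mul_sum (P := P) (X := X)
    (Y := id) (P' := gaussianReal 0 1) HasLaw.id
    (by simpa using hcomp (fun x => x) measurable_id)
    (by simpa using (hcomp (fun x => x ^ 2) (by fun_prop)).trans (by norm_num)) hind hid
  set c' : ℕ → ℝ := fun k => if h : k < K then c ⟨k, h⟩ else 0 with hc'
  set F : ℝ × ℝ → ℝ := fun z =>
    ∑ k ∈ Finset.range K, c' k / √(k.factorial) * ρ ^ k * deformedHermite k z.2 z.1 with hF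
  have hFc : Continuous F := by fun_prop
  have hlim := hclt.continuous_comp_prodMk_of_tendstoInMeasure_const hFc
    (Y := fun (m : ℕ) _ => (m : ℝ)⁻¹) (c := 0)
    (tendstoInMeasure_of_tendsto_ae (fun m => aestronglyMeasurable_const)
      (ae_of_all _ fun _ => tendsto_inv_atTop_nhds_zero_nat)) (fun m => aemeasurable_const)
  have hfat := lintegral_le_liminf_lintegral_of_forall_isOpen_measure_le_liminf_measure
    (f := fun x : ℝ => |x| ^ q) (by fun_prop (disch := exact hq0.le))
    (fun x => by positivity)
    (fun G hG => ProbabilityMeasure.le_liminf_measure_open_of_tendsto hlim.tendsto hG)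
  have hen : ∀ r : ℝ, ENNReal.ofReal (|r| ^ q) = ‖r‖ₑ ^ q := fun r => by
    rw [Real.enorm_eq_ofReal_abs, ENNReal.ofReal_rpow_of_nonneg (abs_nonneg _) hq0.le]
  have hsum : ∑ k : Fin K, c k ^ 2 = ∑ k ∈ Finset.range K, c' k ^ 2 := by
    rw [Finset.sum_range]
    exact Finset.sum_congr rfl fun k _ => by simp [hc']
  simp only [ProbabilityMeasure.coe_mk, hen] at hfat
  rw [lintegral_map' (by fun_prop) (by fun_prop)] at hfat
  rw [hsum]
  refine le_trans (le_of_eq (lintegral_congr fun x => ?_)) (hfat.trans ?_)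
  · congr 2
    simp only [id, hF, deformedHermite_zero]
    rw [Finset.sum_range]
    refine Finset.sum_congr rfl fun k _ => ?_
    simp only [hc', hermiteFn_eq, Fin.is_lt, dif_pos]
    ring
  · refine liminf_le_of_frequently_le' (Eventually.frequently ?_)
    filter_upwards [eventually_ne_atTop 0] with m hm
    rw [lintegral_map (by fun_prop) (by fun_prop)]
    have hw := lintegral_sum_elemSymm_le hq hρ hX (fun i => (hlaw i).map_eq) hind m K
      (fun k => c' k / √(k.factorial) * (k.factorial / √m ^ k))
    refine le_trans (le_of_eq (lintegral_congr_ae ?_)) (hw.trans ?_)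
    · filter_upwards [hsq] with ω hω
      congr 2
      simp only [hF]
      refine Finset.sum_congr rfl fun k _ => ?_
      rw [deformedHermite_inv hω hm]
      ring
    · refine ENNReal.rpow_le_rpow (ENNReal.ofReal_le_ofReal ?_) (by linarith)
      refine Finset.sum_le_sum fun k _ => ?_
      have hm0 : (0 : ℝ) < m := by positivity
      have hk0 : (0 : ℝ) < k.factorial := by positivity
      have h1 : (m.choose k : ℝ) ≤ m ^ k / k.factorial := Nat.choose_le_pow_div k m
      have h2 : (√(m : ℝ) ^ k) ^ 2 = m ^ k := by
        rw [← pow_mul, mul_comm, pow_mul, Real.sq_sqrt hm0.le]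
      have h3 : √(k.factorial : ℝ) ^ 2 = k.factorial := Real.sq_sqrt hk0.le
      rw [mul_pow, div_pow, div_pow, h2, h3]
      calc _ ≤ c' k ^ 2 / k.factorial * (k.factorial ^ 2 / m ^ k) * (m ^ k / k.factorial) :=
            mul_le_mul_of_nonneg_left h1 (by positivity)
        _ = c' k ^ 2 := by field_simp

/-! ### Orthonormality of the Hermite functions -/

lemma integrable_eval_gaussianReal (p : Polynomial ℝ) :
    Integrable (fun x => p.eval x) (gaussianReal 0 1) := by
  simp only [Polynomial.eval_eq_sum_range]
  refine integrable_finsetSum _ fun k _ => Integrable.const_mul ?_ _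
  rw [← integrable_norm_iff (by fun_prop)]
  simpa using (memLp_id_gaussianReal (μ := 0) (v := 1) k).integrable_norm_pow'

lemma hasDerivAt_gaussianPDFReal_zero_one (x : ℝ) :
    HasDerivAt (gaussianPDFReal 0 1) (-(x * gaussianPDFReal 0 1 x)) x := by
  have h : HasDerivAt (fun x : ℝ => -x ^ 2 / 2) (-x) x := by
    refine ((hasDerivAt_pow 2 x).fun_neg.div_const 2).congr_deriv ?_
    push_cast
    ring
  have h2 := h.exp.const_mul (√(2 * Real.pi))⁻¹
  have e : gaussianPDFReal 0 1 = fun x => (√(2 * Real.pi))⁻¹ * Real.exp (-x ^ 2 / 2) := by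
    ext x
    simp [gaussianPDFReal]
  rw [e]
  exact h2.congr_deriv (by ring)

/-- Gaussian integration by parts for polynomials. -/
lemma integral_X_mul_sub_derivative (p : Polynomial ℝ) :
    ∫ x, (Polynomial.X * p - Polynomial.derivative p).eval x ∂(gaussianReal 0 1) = 0 := by
  have hint : ∀ r : Polynomial ℝ, Integrable fun x => gaussianPDFReal 0 1 x * r.eval x := by
    intro r
    have h := integrable_eval_gaussianReal r
    rw [gaussianReal_of_var_ne_zero 0 one_ne_zero,
      integrable_withDensity_iff_integrable_smul' (measurable_gaussianPDF _ _)
        (ae_of_all _ fun _ => gaussianPDF_lt_top)] at h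
    simpa [toReal_gaussianPDF] using h
  rw [integral_gaussianReal_eq_integral_smul one_ne_zero, ← neg_eq_zero, ← integral_neg]
  simp only [smul_eq_mul]
  refine integral_eq_zero_of_hasDerivAt_of_integrable
    (f := fun x => gaussianPDFReal 0 1 x * p.eval x) (fun x => ?_) (hint _).neg (hint p)
  refine ((hasDerivAt_gaussianPDFReal_zero_one x).fun_mul (p.hasDerivAt x)).congr_deriv ?_
  simp only [Polynomial.eval_sub, Polynomial.eval_mul, Polynomial.eval_X]
  ring

lemma integral_hermiteR_succ_mul (k : ℕ) (p : Polynomial ℝ) :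
    ∫ x, (hermiteR (k + 1) * p).eval x ∂(gaussianReal 0 1)
      = ∫ x, (hermiteR k * Polynomial.derivative p).eval x ∂(gaussianReal 0 1) := by
  have h := integral_X_mul_sub_derivative (hermiteR k * p)
  have e : Polynomial.X * (hermiteR k * p) - Polynomial.derivative (hermiteR k * p)
      = hermiteR (k + 1) * p - hermiteR k * Polynomial.derivative p := by
    rw [hermiteR_succ, Polynomial.derivative_mul]
    ring
  simp only [e, Polynomial.eval_sub] at h
  rwa [integral_sub (integrable_eval_gaussianReal _) (integrable_eval_gaussianReal _),
    sub_eq_zero] at h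

lemma integral_hermiteR_mul (j k : ℕ) :
    ∫ x, (hermiteR j * hermiteR k).eval x ∂(gaussianReal 0 1)
      = if j = k then (k.factorial : ℝ) else 0 := by
  induction j generalizing k with
  | zero =>
    cases k with
    | zero => simp [hermiteR_zero]
    | succ k =>
      rw [mul_comm, integral_hermiteR_succ_mul, hermiteR_zero]
      simp
  | succ j ih =>
    rw [integral_hermiteR_succ_mul]
    cases k with
    | zero => simp [hermiteR_zero]
    | succ k =>
      have e : ∀ x, (hermiteR j * Polynomial.derivative (hermiteR (k + 1))).eval x
          = (k + 1) * (hermiteR j * hermiteR k).eval x := fun x => by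
        simp [derivative_hermiteR_succ]
        ring
      simp only [e, integral_const_mul, ih, add_left_inj, Nat.factorial_succ]
      split_ifs <;> simp

lemma integrable_hermiteFn_mul (j k : ℕ) :
    Integrable (fun x => hermiteFn j x * hermiteFn k x) (gaussianReal 0 1) := by
  have h := (integrable_eval_gaussianReal (hermiteR j * hermiteR k)).div_const
    (√(j.factorial) * √(k.factorial))
  refine h.congr (ae_of_all _ fun x => ?_)
  simp only [hermiteFn_eq, Polynomial.eval_mul]
  ring

lemma integral_hermiteFn_mul (j k : ℕ) :
    ∫ x, hermiteFn j x * hermiteFn k x ∂(gaussianReal 0 1) = if j = k then 1 else 0 := by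
  have e : ∀ x, hermiteFn j x * hermiteFn k x
      = (hermiteR j * hermiteR k).eval x / (√(j.factorial) * √(k.factorial)) := fun x => by
    simp only [hermiteFn_eq, Polynomial.eval_mul]
    ring
  simp only [e, integral_div, integral_hermiteR_mul]
  split_ifs with h
  · subst h
    rw [Real.mul_self_sqrt (by positivity), div_self (by positivity)]
  · simp

instance (n : ℕ) : IsProbabilityMeasure (gaussianN n) := by
  unfold gaussianN
  infer_instance

lemma integrable_hermiteMv_mul {n : ℕ} (α β : Fin n → ℕ) :
    Integrable (fun x => hermiteMv α x * hermiteMv β x) (gaussianN n) := by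
  simp only [hermiteMv, ← Finset.prod_mul_distrib]
  exact Integrable.fintype_prod_dep (f := fun i x => hermiteFn (α i) x * hermiteFn (β i) x)
    fun i => integrable_hermiteFn_mul (α i) (β i)

lemma integral_hermiteMv_mul {n : ℕ} (α β : Fin n → ℕ) :
    ∫ x, hermiteMv α x * hermiteMv β x ∂(gaussianN n) = if α = β then 1 else 0 := by
  simp only [hermiteMv, ← Finset.prod_mul_distrib, gaussianN]
  rw [integral_fintype_prod_eq_prod fun i x => hermiteFn (α i) x * hermiteFn (β i) x]
  simp only [integral_hermiteFn_mul, Finset.prod_ite_zero, Finset.mem_univ, true_imp_iff,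
    funext_iff, Finset.prod_const_one]

/-! ### Hermite expansion of a polynomial -/

lemma hermiteFn_zero (t : ℝ) : hermiteFn 0 t = 1 := by simp [hermiteFn_eq, hermiteR_zero]

lemma hermiteMv_zero {n : ℕ} (x : Fin n → ℝ) : hermiteMv 0 x = 1 := by
  simp [hermiteMv, hermiteFn_zero]

lemma mul_hermiteFn (k : ℕ) (t : ℝ) :
    t * hermiteFn k t = √(k + 1) * hermiteFn (k + 1) t + √k * hermiteFn (k - 1) t := by
  cases k with
  | zero => simp [hermiteFn_eq, hermiteR_zero, hermiteR_one]
  | succ k =>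
    have h1 : (0 : ℝ) < √(k + 1) := by positivity
    have h2 : (0 : ℝ) < √(k + 1 + 1) := by positivity
    have h3 : (0 : ℝ) < √(k.factorial) := by positivity
    have h4 : (k + 1 : ℝ) = √(k + 1) ^ 2 := (Real.sq_sqrt (by positivity)).symm
    simp only [hermiteFn_eq, hermiteR_succ_succ, Nat.factorial_succ, Nat.add_sub_cancel]
    push_cast
    rw [Real.sqrt_mul (by positivity) ((k + 1) * k.factorial : ℝ),
      Real.sqrt_mul (by positivity) (k.factorial : ℝ)]
    simp only [Polynomial.eval_sub, Polynomial.eval_mul, Polynomial.eval_X, Polynomial.eval_add,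
      Polynomial.eval_natCast, Polynomial.eval_one]
    field_simp
    rw [← h4]
    ring

lemma mul_hermiteMv {n : ℕ} (i : Fin n) (α : Fin n → ℕ) (x : Fin n → ℝ) :
    x i * hermiteMv α x = √(α i + 1) * hermiteMv (Function.update α i (α i + 1)) x
      + √(α i) * hermiteMv (Function.update α i (α i - 1)) x := by
  have h : ∀ k, hermiteMv (Function.update α i k) x
      = hermiteFn k (x i) * ∏ j ∈ Finset.univ.erase i, hermiteFn (α j) (x j) := by
    intro k
    rw [hermiteMv, ← Finset.mul_prod_erase _ _ (Finset.mem_univ i), Function.update_self]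
    congr 1
    refine Finset.prod_congr rfl fun j hj => ?_
    rw [Function.update_of_ne (Finset.ne_of_mem_erase hj)]
  have h0 := h (α i)
  rw [Function.update_eq_self] at h0
  rw [h, h, h0, ← mul_assoc, mul_hermiteFn]
  ring

lemma eval_mem_span_hermiteMv {n : ℕ} (g : MvPolynomial (Fin n) ℝ) :
    (fun x => eval x g) ∈ Submodule.span ℝ (Set.range (hermiteMv (n := n))) := by
  induction g using MvPolynomial.induction_on with
  | C a =>
    have e : (fun x : Fin n → ℝ => eval x (C a : MvPolynomial (Fin n) ℝ)) = a • hermiteMv 0 := by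
      ext x
      simp [hermiteMv_zero]
    rw [e]
    exact Submodule.smul_mem _ _ (Submodule.subset_span ⟨0, rfl⟩)
  | add p q hp hq =>
    simp only [map_add]
    exact Submodule.add_mem _ hp hq
  | mul_X p i hp =>
    simp only [map_mul, eval_X]
    suffices h : ∀ f ∈ Submodule.span ℝ (Set.range (hermiteMv (n := n))),
        (fun x => f x * x i) ∈ Submodule.span ℝ (Set.range (hermiteMv (n := n))) from h _ hp
    intro f hf
    induction hf using Submodule.span_induction with
    | mem f hf =>
      obtain ⟨α, rfl⟩ := hf
      have e : (fun x => hermiteMv α x * x i)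
          = √(α i + 1) • hermiteMv (Function.update α i (α i + 1))
            + √(α i) • hermiteMv (Function.update α i (α i - 1)) := by
        ext x
        rw [mul_comm, mul_hermiteMv]
        simp
      rw [e]
      exact Submodule.add_mem _ (Submodule.smul_mem _ _ (Submodule.subset_span ⟨_, rfl⟩))
        (Submodule.smul_mem _ _ (Submodule.subset_span ⟨_, rfl⟩))
    | zero =>
      simp only [Pi.zero_apply, zero_mul]
      exact Submodule.zero_mem _
    | add f g _ _ hf hg =>
      simp only [Pi.add_apply, add_mul]
      exact Submodule.add_mem _ hf hg
    | smul a f _ hf =>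
      simp only [Pi.smul_apply, smul_eq_mul, mul_assoc]
      exact Submodule.smul_mem _ a hf

lemma exists_hermite_expansion {n : ℕ} (g : MvPolynomial (Fin n) ℝ) :
    ∃ c : (Fin n → ℕ) →₀ ℝ, ∀ x, eval x g = ∑ α ∈ c.support, c α * hermiteMv α x := by
  obtain ⟨c, hc⟩ := Finsupp.mem_span_range_iff_exists_finsupp.1 (eval_mem_span_hermiteMv g)
  refine ⟨c, fun x => ?_⟩
  have h := congrFun hc x
  simpa [Finsupp.sum] using h.symm

lemma hermiteCoeff_eq {n : ℕ} {g : MvPolynomial (Fin n) ℝ} {c : (Fin n → ℕ) →₀ ℝ}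
    (hc : ∀ x, eval x g = ∑ α ∈ c.support, c α * hermiteMv α x) (β : Fin n → ℕ) :
    hermiteCoeff g β = c β := by
  simp only [hermiteCoeff, hermiteCoeffF, hc, Finset.sum_mul, mul_assoc]
  rw [integral_finsetSum _ fun α _ => (integrable_hermiteMv_mul α β).const_mul _]
  simp +contextual [integral_const_mul, integral_hermiteMv_mul, eq_comm]

lemma integral_eval_eq {n : ℕ} {g : MvPolynomial (Fin n) ℝ} {c : (Fin n → ℕ) →₀ ℝ}
    (hc : ∀ x, eval x g = ∑ α ∈ c.support, c α * hermiteMv α x) :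
    ∫ x, eval x g ∂(gaussianN n) = c 0 := by
  rw [← hermiteCoeff_eq hc 0]
  simp [hermiteCoeff, hermiteCoeffF, hermiteMv_zero]

/-- The Parseval identity for polynomials. -/
lemma norm2sq_eq {n : ℕ} {g : MvPolynomial (Fin n) ℝ} {c : (Fin n → ℕ) →₀ ℝ}
    (hc : ∀ x, eval x g = ∑ α ∈ c.support, c α * hermiteMv α x) :
    norm2sq g = ∑ α ∈ c.support, c α ^ 2 := by
  have e : ∀ x, eval x g ^ 2 = ∑ α ∈ c.support, ∑ β ∈ c.support,
      c α * c β * (hermiteMv α x * hermiteMv β x) := fun x => by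
    rw [sq, hc, Finset.sum_mul_sum]
    exact Finset.sum_congr rfl fun α _ => Finset.sum_congr rfl fun β _ => by ring
  simp only [norm2sq, e]
  rw [integral_finsetSum _ fun α _ => integrable_finsetSum _ fun β _ =>
    (integrable_hermiteMv_mul α β).const_mul _]
  refine Finset.sum_congr rfl fun α hα => ?_
  rw [integral_finsetSum _ fun β _ => (integrable_hermiteMv_mul α β).const_mul _]
  simp only [integral_const_mul, integral_hermiteMv_mul, mul_ite, mul_one, mul_zero,
    Finset.sum_ite_eq, hα, if_true, sq]

lemma hyperVar_eq {n : ℕ} {g : MvPolynomial (Fin n) ℝ} {c : (Fin n → ℕ) →₀ ℝ}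
    (hc : ∀ x, eval x g = ∑ α ∈ c.support, c α * hermiteMv α x) (R : ℝ) :
    hyperVar R g = ∑ α ∈ c.support.erase 0, R ^ (2 * ∑ i, α i) * c α ^ 2 := by
  have h0 : ∀ α : Fin n → ℕ, 1 ≤ ∑ i, α i ↔ α ≠ 0 := fun α => by
    rw [Nat.one_le_iff_ne_zero, Ne, Finset.sum_eq_zero_iff]
    simp [funext_iff]
  simp only [hyperVar, hyperVarGE, hermiteCoeff_eq hc, h0]
  rw [tsum_eq_sum (s := c.support.erase 0)]
  · refine Finset.sum_congr rfl fun α hα => ?_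
    rw [if_pos (Finset.ne_of_mem_erase hα)]
  · intro α hα
    by_cases h : α = 0
    · simp [h]
    · have : c α = 0 := by simpa [h] using hα
      simp [this]

/-! ### Hypercontractivity of polynomials -/

lemma sum_fin_ite_mem {n K : ℕ} (S : Finset (Fin n → ℕ)) (hK : ∀ α ∈ S, ∀ i, α i < K)
    (F : (Fin n → ℕ) → ℝ) :
    ∑ a : Fin n → Fin K, (if (fun i => (a i : ℕ)) ∈ S then F fun i => a i else 0)
      = ∑ α ∈ S, F α := by
  rw [← Finset.sum_filter]
  refine Finset.sum_bij (fun a _ i => (a i : ℕ)) (fun a ha => (Finset.mem_filter.1 ha).2)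
    (fun a _ b _ h => funext fun i => Fin.ext (congrFun h i))
    (fun α hα => ⟨fun i => ⟨α i, hK α hα i⟩, ?_, rfl⟩) fun _ _ => rfl
  simpa using hα

/-- Gaussian hypercontractivity: an `L^q` bound for finite Hermite sums. -/
lemma lintegral_sum_hermiteMv_rpow_le {n : ℕ} {q : ℝ} (hq : 2 ≤ q) (S : Finset (Fin n → ℕ))
    (c : (Fin n → ℕ) → ℝ) :
    ∫⁻ x, ‖∑ α ∈ S, c α * hermiteMv α x‖ₑ ^ q ∂(gaussianN n)
      ≤ ENNReal.ofReal (∑ α ∈ S, (q - 1) ^ (∑ i, α i) * c α ^ 2) ^ (q / 2) := by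
  have hq1 : 0 < q - 1 := by linarith
  obtain ⟨K, hK⟩ : ∃ K, ∀ α ∈ S, ∀ i, α i < K :=
    ⟨(S.sup fun α => Finset.univ.sup α) + 1, fun α hα i => Nat.lt_succ_of_le <|
      (Finset.le_sup (f := α) (Finset.mem_univ i)).trans
        (Finset.le_sup (f := fun α : Fin n → ℕ => Finset.univ.sup α) hα)⟩
  have hs : √(q - 1) ≠ 0 := (Real.sqrt_pos.2 hq1).ne'
  have hρ : (√(q - 1))⁻¹ ^ 2 * (q - 1) = 1 := by
    rw [inv_pow, Real.sq_sqrt hq1.le, inv_mul_cancel₀ hq1.ne']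
  have h := (isHypercontractiveSystem_hermiteFn hq hρ K).pi hq
    (fun k : Fin K => (measurable_hermiteFn k).const_mul ((√(q - 1))⁻¹ ^ (k : ℕ))) n fun a =>
      if (fun i => (a i : ℕ)) ∈ S then √(q - 1) ^ (∑ i, (a i : ℕ)) * c fun i => a i else 0
  rw [← sum_fin_ite_mem S hK]
  simp only [← sum_fin_ite_mem S hK]
  refine le_trans (le_of_eq (lintegral_congr fun x => ?_)) (h.trans (le_of_eq ?_))
  · congr 2
    refine Finset.sum_congr rfl fun a _ => ?_
    split_ifs
    · simp only [Finset.prod_mul_distrib, Finset.prod_pow_eq_pow_sum, hermiteMv]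
      rw [inv_pow]
      field_simp
    · simp
  · congr 2
    refine Finset.sum_congr rfl fun a _ => ?_
    split_ifs
    · rw [mul_pow, ← pow_mul, mul_comm _ 2, pow_mul, Real.sq_sqrt hq1.le]
    · simp

/-- Attenuated polynomials are hyperconcentrated: if `g` is `(R,θ)`-attenuated
(`HyperVar_R[g] ≤ θ·‖g‖₂²`) with `R ≥ √2` and `0 ≤ θ ≤ 1`, then with
`μ = E_{x ∼ N(0,1)^n}[g(x)]` and `q = 1 + R²/2`,
`(E[|g(x) - μ|^q])^{1/q} ≤ √θ·|μ|`. -/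
theorem attenuated_implies_hyperconcentrated (n : ℕ) (g : MvPolynomial (Fin n) ℝ)
    (R θ : ℝ) (hR : Real.sqrt 2 ≤ R) (hθ0 : 0 ≤ θ) (hθ1 : θ ≤ 1)
    (hatt : hyperVar R g ≤ θ * norm2sq g) :
    (∫ x, |eval x g - ∫ y, eval y g ∂(gaussianN n)| ^ (1 + R ^ 2 / 2) ∂(gaussianN n)) ^
        (1 / (1 + R ^ 2 / 2)) ≤
      Real.sqrt θ * |∫ x, eval x g ∂(gaussianN n)| := by
  obtain ⟨c, hc⟩ := exists_hermite_expansion g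
  have hR2 : 2 ≤ R ^ 2 := by
    have h := pow_le_pow_left₀ (Real.sqrt_nonneg 2) hR 2
    rwa [Real.sq_sqrt zero_le_two] at h
  set q := 1 + R ^ 2 / 2 with hq_def
  have hq : 2 ≤ q := by linarith
  have hq0 : 0 < q := by linarith
  rw [integral_eval_eq hc]
  have hN : norm2sq g = ∑ α ∈ c.support.erase 0, c α ^ 2 + c 0 ^ 2 := by
    rw [norm2sq_eq hc]
    by_cases h : (0 : Fin n → ℕ) ∈ c.support
    · rw [Finset.sum_erase_add _ _ h]
    · rw [Finset.erase_eq_of_notMem h, Finsupp.notMem_support_iff.1 h]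
      simp
  have hpos : ∀ α ∈ c.support.erase 0, 1 ≤ ∑ i, α i := fun α hα => by
    rw [Nat.one_le_iff_ne_zero]
    intro h
    refine Finset.ne_of_mem_erase hα (funext fun i => ?_)
    exact Finset.sum_eq_zero_iff.1 h i (Finset.mem_univ i)
  rw [hyperVar_eq hc] at hatt
  have hvar : ∑ α ∈ c.support.erase 0, c α ^ 2
      ≤ (∑ α ∈ c.support.erase 0, R ^ (2 * ∑ i, α i) * c α ^ 2) / 2 := by
    rw [Finset.sum_div]
    refine Finset.sum_le_sum fun α hα => ?_
    have h1 : 2 ≤ R ^ (2 * ∑ i, α i) := by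
      rw [pow_mul]
      exact hR2.trans (le_self_pow₀ (by linarith) (by have := hpos α hα; omega))
    nlinarith [sq_nonneg (c α)]
  have hhyp : ∑ α ∈ c.support.erase 0, (q - 1) ^ (∑ i, α i) * c α ^ 2
      ≤ (∑ α ∈ c.support.erase 0, R ^ (2 * ∑ i, α i) * c α ^ 2) / 2 := by
    rw [Finset.sum_div]
    refine Finset.sum_le_sum fun α hα => ?_
    have h1 : (2 : ℝ) ≤ 2 ^ (∑ i, α i) :=
      le_self_pow₀ one_le_two (by have := hpos α hα; omega)
    rw [hq_def, add_sub_cancel_left, div_pow, pow_mul, mul_div_right_comm]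
    gcongr
  have hbound : ∑ α ∈ c.support.erase 0, (q - 1) ^ (∑ i, α i) * c α ^ 2 ≤ θ * c 0 ^ 2 := by
    have h1 : 0 ≤ norm2sq g := by rw [norm2sq_eq hc]; positivity
    have h2 : norm2sq g ≤ 2 * c 0 ^ 2 := by nlinarith
    nlinarith
  have hsub : ∀ x, eval x g - c 0 = ∑ α ∈ c.support.erase 0, c α * hermiteMv α x := by
    intro x
    rw [hc]
    by_cases h : (0 : Fin n → ℕ) ∈ c.support
    · rw [← Finset.sum_erase_add _ _ h, hermiteMv_zero]
      ring
    · rw [Finset.erase_eq_of_notMem h, Finsupp.notMem_support_iff.1 h, sub_zero]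
  have hmain : ∫ x, |eval x g - c 0| ^ q ∂(gaussianN n) ≤ (θ * c 0 ^ 2) ^ (q / 2) := by
    have hcont : Continuous fun x : Fin n → ℝ => |eval x g - c 0| ^ q :=
      (((MvPolynomial.continuous_eval g).sub continuous_const).abs).rpow_const
        fun _ => Or.inr hq0.le
    rw [integral_eq_lintegral_of_nonneg_ae (ae_of_all _ fun x => by positivity)
      hcont.aestronglyMeasurable]
    refine ENNReal.toReal_le_of_le_ofReal (by positivity) ?_
    rw [← ENNReal.ofReal_rpow_of_nonneg (by positivity) (by positivity)]
    simp only [hsub, ← ENNReal.ofReal_rpow_of_nonneg (abs_nonneg _) hq0.le,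
      ← Real.enorm_eq_ofReal_abs]
    exact (lintegral_sum_hermiteMv_rpow_le hq _ c).trans
      (ENNReal.rpow_le_rpow (ENNReal.ofReal_le_ofReal hbound) (by positivity))
  calc _ ≤ ((θ * c 0 ^ 2) ^ (q / 2)) ^ (1 / q) :=
        Real.rpow_le_rpow (integral_nonneg fun x => by positivity) hmain (by positivity)
    _ = √θ * |c 0| := by
        rw [← Real.rpow_mul (by positivity), show q / 2 * (1 / q) = 1 / 2 by field_simp,
          ← Real.sqrt_eq_rpow, Real.sqrt_mul hθ0, Real.sqrt_sq_eq_abs]
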